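/- Let D be an ADF and let w be a strongly admissible interpretation of D. Then there exists m ∈ ℕ such that w ≤_i Γ_D^m(v_u), where Γ_D^m denotes the m-fold iterate of the characteristic operator applied to the trivial interpretation. -/

import Mathlib

/-!
A derivation of strong acceptability or deniability with respect to `v` is a well-founded tree. By
induction on it, the iterates of `Γ` from any starting interpretation eventually agree with `v` at
the root: each parent in the witnessing set `P` eventually has its `v`-value, and as `P` is finite,
the `m`-th iterate extends `v|_P` for all large `m`. The acceptance condition is then settled, so the
next iterate takes the value of `v` at the root. Finitely many decided arguments stabilise
simultaneously.
-/

/-- Three truth values: true, false, undecided. -/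
inductive TV : Type
  | t | f | u
deriving DecidableEq, Repr

/-- The information order on truth values: u <_i t and u <_i f. -/
def TV.ile (x y : TV) : Prop := x = TV.u ∨ x = y

/-- The information order on interpretations, extended pointwise. -/
def ILE {A : Type*} (v w : A → TV) : Prop := ∀ a, TV.ile (v a) (w a)

/-- An abstract dialectical framework on a set of arguments `A`:
each argument `a` has an acceptance condition `C a : (A → Bool) → Bool`. -/
structure ADF (A : Type*) where
  C : A → (A → Bool) → Bool

/-- The trivial interpretation mapping every argument to undecided. -/
def trivialInterp (A : Type*) : A → TV := fun _ => TV.u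

/-- The parents of `a` are the arguments on which its acceptance condition depends. -/
def ADF.parents {A : Type*} [DecidableEq A] (D : ADF A) (a : A) : Set A :=
  {b | ∃ w : A → Bool, D.C a w ≠ D.C a (Function.update w b (!w b))}

/-- A two-valued assignment `w` completes a three-valued interpretation `v`. -/
def Completes {A : Type*} (w : A → Bool) (v : A → TV) : Prop :=
  ∀ b, (v b = TV.t → w b = true) ∧ (v b = TV.f → w b = false)

/-- `φ` is irrefutable under `v`: every completion of `v` makes `φ` true. -/
def Irrefutable {A : Type*} (φ : (A → Bool) → Bool) (v : A → TV) : Prop :=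
  ∀ w : A → Bool, Completes w v → φ w = true

/-- `φ` is unsatisfiable under `v`: every completion of `v` makes `φ` false. -/
def Unsat {A : Type*} (φ : (A → Bool) → Bool) (v : A → TV) : Prop :=
  ∀ w : A → Bool, Completes w v → φ w = false

open Classical in
/-- The characteristic operator Γ_D of an ADF. -/
noncomputable def Gamma {A : Type*} (D : ADF A) (v : A → TV) : A → TV := fun a =>
  if Irrefutable (D.C a) v then TV.t
  else if Unsat (D.C a) v then TV.f
  else TV.u

open Classical in
/-- `v|_P`: agrees with `v` on `P` and is undecided elsewhere. -/
noncomputable def restrictTV {A : Type*} (v : A → TV) (P : Set A) : A → TV :=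
  fun b => if b ∈ P then v b else TV.u

/-- Strong acceptability/deniability of an argument with respect to interpretation `v`
and set `S`, relative to an excluded set `E` (the first index). An argument `a` with
`v a = t` (resp. `v a = f`) is strongly acceptable (resp. strongly deniable) iff there is
`P ⊆ (parents a ∩ S) \ E` with `φ_a^{v|_P}` irrefutable (resp. unsatisfiable) and every
`p ∈ P` strongly acceptable/deniable relative to `E ∪ {p}`. -/
inductive SJrel {A : Type*} [DecidableEq A] (D : ADF A) (v : A → TV) (S : Set A) :
    Set A → A → Prop
  | acc (E : Set A) (a : A) (P : Set A)
      (ha : v a = TV.t)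
      (hP : P ⊆ (D.parents a ∩ S) \ E)
      (hirr : Irrefutable (D.C a) (restrictTV v P))
      (hrec : ∀ p ∈ P, SJrel D v S (E ∪ {p}) p) : SJrel D v S E a
  | den (E : Set A) (a : A) (P : Set A)
      (ha : v a = TV.f)
      (hP : P ⊆ (D.parents a ∩ S) \ E)
      (hunsat : Unsat (D.C a) (restrictTV v P))
      (hrec : ∀ p ∈ P, SJrel D v S (E ∪ {p}) p) : SJrel D v S E a

/-- `a` is strongly acceptable/deniable w.r.t. `v` and `S`
(i.e., relative to the excluded set `{a}`). -/
def StronglyJustified {A : Type*} [DecidableEq A] (D : ADF A) (v : A → TV)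
    (S : Set A) (a : A) : Prop :=
  SJrel D v S {a} a

/-- `S` is a least set for `a` with respect to `v`. -/
def LeastSet {A : Type*} [DecidableEq A] (D : ADF A) (v : A → TV)
    (a : A) (S : Set A) : Prop :=
  StronglyJustified D v S a ∧
  ∀ S' : Set A, S'.ncard < S.ncard → ¬ StronglyJustified D v S' a

/-- An interpretation is strongly admissible iff every argument assigned `t`/`f`
is strongly acceptable/deniable w.r.t. `v` and some set `S`. -/
def StronglyAdmissible {A : Type*} [DecidableEq A] (D : ADF A) (v : A → TV) : Prop :=
  ∀ a : A, v a ≠ TV.u → ∃ S : Set A, StronglyJustified D v S a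

/-- `g` is the grounded interpretation of `D`: the least fixed point of `Γ_D`. -/
def IsGrounded {A : Type*} (D : ADF A) (g : A → TV) : Prop :=
  Gamma D g = g ∧ ∀ w : A → TV, Gamma D w = w → ILE g w

/-- An interpretation is admissible iff `v ≤_i Γ_D(v)`. -/
def Admissible {A : Type*} (D : ADF A) (v : A → TV) : Prop :=
  ILE v (Gamma D v)

/-- An interpretation is conflict-free. -/
def ConflictFree {A : Type*} (D : ADF A) (v : A → TV) : Prop :=
  ∀ a : A, (v a = TV.t → ∃ w : A → Bool, Completes w v ∧ D.C a w = true) ∧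
           (v a = TV.f → Unsat (D.C a) v)

/-- The join of two interpretations: take `v`'s value where defined, else `w`'s. -/
def joinI {A : Type*} (v w : A → TV) : A → TV :=
  fun a => if v a = TV.u then w a else v a

open Filter

section

variable {A : Type*}

theorem Completes.of_ile {x : A → Bool} {v v' : A → TV} (hx : Completes x v') (h : ILE v v') :
    Completes x v := by
  intro b
  rcases h b with hb | hb
  · simp [hb]
  · simpa only [hb] using hx b

theorem exists_completes (v : A → TV) : ∃ x : A → Bool, Completes x v :=
  ⟨fun b => decide (v b = TV.t), fun b => by constructor <;> intro h <;> simp [h]⟩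

theorem Irrefutable.mono {φ : (A → Bool) → Bool} {v v' : A → TV} (hφ : Irrefutable φ v)
    (h : ILE v v') : Irrefutable φ v' :=
  fun x hx => hφ x (hx.of_ile h)

theorem Unsat.mono {φ : (A → Bool) → Bool} {v v' : A → TV} (hφ : Unsat φ v) (h : ILE v v') :
    Unsat φ v' :=
  fun x hx => hφ x (hx.of_ile h)

theorem Unsat.not_irrefutable {φ : (A → Bool) → Bool} {v : A → TV} (hφ : Unsat φ v) :
    ¬ Irrefutable φ v := by
  intro hφ'
  obtain ⟨x, hx⟩ := exists_completes v
  exact Bool.false_ne_true ((hφ x hx).symm.trans (hφ' x hx))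

theorem Gamma_eq_t {D : ADF A} {v : A → TV} {a : A} (h : Irrefutable (D.C a) v) :
    Gamma D v a = TV.t :=
  if_pos h

theorem Gamma_eq_f {D : ADF A} {v : A → TV} {a : A} (h : Unsat (D.C a) v) :
    Gamma D v a = TV.f :=
  (if_neg h.not_irrefutable).trans (if_pos h)

theorem restrictTV_ile {v v' : A → TV} {P : Set A} (h : ∀ p ∈ P, v' p = v p) :
    ILE (restrictTV v P) v' := by
  intro b
  by_cases hb : b ∈ P
  · exact Or.inr ((if_pos hb).trans (h b hb).symm)
  · exact Or.inl (if_neg hb)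

theorem eventually_iterate_of_forall_imp {α : Type*} {f : α → α} {x : α} {p q : α → Prop}
    (hpq : ∀ y, p y → q (f y)) (hp : ∀ᶠ n in atTop, p (f^[n] x)) :
    ∀ᶠ n in atTop, q (f^[n] x) := by
  rw [← map_add_atTop_eq_nat 1, eventually_map]
  filter_upwards [hp] with n hn
  rw [Function.iterate_succ_apply']
  exact hpq _ hn

theorem eventually_iterate_Gamma_eq {D : ADF A} {v v₀ : A → TV} {a : A} {P : Set A}
    (hP : P.Finite) (hΓ : ∀ v', ILE (restrictTV v P) v' → Gamma D v' a = v a)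
    (h : ∀ p ∈ P, ∀ᶠ m in atTop, (Gamma D)^[m] v₀ p = v p) :
    ∀ᶠ m in atTop, (Gamma D)^[m] v₀ a = v a := by
  refine eventually_iterate_of_forall_imp (q := fun v' : A → TV => v' a = v a) hΓ ?_
  filter_upwards [(eventually_all_finite hP).2 h] with m hm
  exact restrictTV_ile hm

variable [DecidableEq A] {D : ADF A} {v : A → TV} {S E : Set A} {a : A}

theorem SJrel.ne_u (h : SJrel D v S E a) : v a ≠ TV.u := by
  cases h with
  | acc _ _ _ ha => simp [ha]
  | den _ _ _ ha => simp [ha]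

theorem SJrel.eventually_iterate_eq (h : SJrel D v S E a) (hv : {b | v b ≠ TV.u}.Finite)
    (v₀ : A → TV) : ∀ᶠ m in atTop, (Gamma D)^[m] v₀ a = v a := by
  induction h with
  | acc E a P ha _ hirr hrec ih =>
    have hP : P.Finite := hv.subset fun p hp => (hrec p hp).ne_u
    exact eventually_iterate_Gamma_eq hP
      (fun _ h => (Gamma_eq_t (hirr.mono h)).trans ha.symm) ih
  | den E a P ha _ hunsat hrec ih =>
    have hP : P.Finite := hv.subset fun p hp => (hrec p hp).ne_u
    exact eventually_iterate_Gamma_eq hP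
      (fun _ h => (Gamma_eq_f (hunsat.mono h)).trans ha.symm) ih

end

theorem strongly_admissible_below_iterate_general {A : Type*} [DecidableEq A] (D : ADF A)
    (w : A → TV) (hw : StronglyAdmissible D w) (hfin : {a | w a ≠ TV.u}.Finite) (v₀ : A → TV) :
    ∀ᶠ m in atTop, ILE w ((Gamma D)^[m] v₀) := by
  have decided : ∀ a ∈ {a | w a ≠ TV.u}, ∀ᶠ m in atTop, (Gamma D)^[m] v₀ a = w a := by
    intro a ha
    obtain ⟨S, hS⟩ := hw a ha
    exact SJrel.eventually_iterate_eq hS hfin v₀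
  filter_upwards [(eventually_all_finite hfin).2 decided] with m hm a
  exact or_iff_not_imp_left.2 fun ha => (hm a ha).symm

/-- Every strongly admissible interpretation is bounded by some
iterate of Γ_D applied to the trivial interpretation. -/
theorem strongly_admissible_below_iterate {A : Type*} [Fintype A] [DecidableEq A]
    (D : ADF A) (w : A → TV) (hw : StronglyAdmissible D w) :
    ∃ m : ℕ, ILE w ((Gamma D)^[m] (trivialInterp A)) :=
  (strongly_admissible_below_iterate_general D w hw (Set.toFinite _) (trivialInterp A)).exists
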